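/- Let n ≥ 2, let f(z) = z_1·z_2·⋯·z_n, and define Φ : 𝔻ⁿ → 𝔻ⁿ by Φ(z) = (f(z), f(z), …, f(z), 0) (the first n-1 components equal f(z), the last component is 0). Then for β > -1 the composition operator C_Φ is bounded on A²_β(𝔻ⁿ) if and only if n ≤ β + 3. -/

import Mathlib

open MeasureTheory Metric Set ENNReal

noncomputable section

/-- The open unit polydisc in `ℂⁿ`. -/
def polydisc (n : ℕ) : Set (Fin n → ℂ) := {z | ∀ j, ‖z j‖ < 1}

/-- The closed unit polydisc in `ℂⁿ`. -/
def closedPolydisc (n : ℕ) : Set (Fin n → ℂ) := {z | ∀ j, ‖z j‖ ≤ 1}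

/-- The distinguished boundary (torus) of the polydisc. -/
def torus (n : ℕ) : Set (Fin n → ℂ) := {z | ∀ j, ‖z j‖ = 1}

/-- The weighted Bergman measure `V_β` on the polydisc: the product of the measures
`dA_β(z) = (β+1)(1-|z|²)^β dA(z)`, where `dA` is normalized area measure on the unit disc. -/
def Vbeta (n : ℕ) (β : ℝ) : Measure (Fin n → ℂ) :=
  (volume.restrict (polydisc n)).withDensity
    (fun z => ENNReal.ofReal (∏ j, ((β + 1) * (1 - ‖z j‖ ^ 2) ^ β / Real.pi)))

/-- The composition operator `C_Φ` is bounded on the weighted Bergman space `A²_β(𝔻ⁿ)`. -/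
def bddBergman (n : ℕ) (β : ℝ) (Φ : (Fin n → ℂ) → (Fin n → ℂ)) : Prop :=
  ∃ C > (0:ℝ), ∀ f : (Fin n → ℂ) → ℂ, DifferentiableOn ℂ f (polydisc n) →
    ∫⁻ z, ENNReal.ofReal (‖f (Φ z)‖ ^ 2) ∂(Vbeta n β) ≤
      ENNReal.ofReal C * ∫⁻ z, ENNReal.ofReal (‖f z‖ ^ 2) ∂(Vbeta n β)

/-!
Put `s = β + 2`, so that `‖z ^ k‖² = 1 / multichoose s k` in `L²(dA_β)`. For a symbol
`z ↦ (∏ j, z j) • x` the composite `f (Φ z)` only sees the slice `w ↦ f (w • x)`, with Taylor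
coefficients `c k`, and rotation invariance gives `‖f ∘ Φ‖² = ∑ k, ‖c k‖² * ‖z ^ k‖² ^ n`. By
Cauchy–Schwarz applied one variable at a time, `‖f‖² ≥ ∑ k, ‖c k‖² / S k`, where `S k` is the
degree `k` part of the reproducing kernel at `(x, x)`, with equality for that part of the kernel.
Hence `C_Φ` is bounded if and only if `S k * ‖z ^ k‖² ^ n` is bounded in `k`. When `x` is the
indicator of a set `A`, Vandermonde's identity gives `S k = multichoose (|A| * s) k`, and
`multichoose t k ≍ k ^ (t - 1)` turns the criterion into `|A| * s - 1 ≤ n * (s - 1)`.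
-/

open Filter Topology PowerSeries
open Finset.HasAntidiagonal (antidiagonal)
open scoped ComplexConjugate Nat

/-! ### Taylor coefficients on the unit disc -/

section Taylor

/-- The coefficient of `z ^ k` in the Taylor expansion of `f` at the origin. -/
def taylorCoeff (f : ℂ → ℂ) (k : ℕ) : ℂ :=
  (k ! : ℂ)⁻¹ * iteratedDeriv k f 0

variable {f : ℂ → ℂ}

theorem hasSum_taylorCoeff (hf : DifferentiableOn ℂ f (ball 0 1)) {z : ℂ} (hz : ‖z‖ < 1) :
    HasSum (fun k => taylorCoeff f k * z ^ k) (f z) := by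
  have h := Complex.hasSum_taylorSeries_on_ball hf (mem_ball_zero_iff.2 hz)
  simpa only [taylorCoeff, sub_zero, smul_eq_mul, mul_assoc, mul_comm (z ^ _)] using h

theorem taylorCoeff_eq_of_hasSum {c : ℕ → ℂ} {r : ℝ} (hr : 0 < r)
    (h : ∀ z : ℂ, ‖z‖ < r → HasSum (fun k => c k * z ^ k) (f z)) : taylorCoeff f = c := by
  set p := FormalMultilinearSeries.ofScalars ℂ c
  have hp : HasFPowerSeriesAt f p 0 := by
    refine hasFPowerSeriesAt_iff.2 ?_
    filter_upwards [ball_mem_nhds (0 : ℂ) hr] with z hz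
    simpa [p, FormalMultilinearSeries.coeff_ofScalars, mul_comm] using h z (mem_ball_zero_iff.1 hz)
  funext k
  have hk := congrArg (fun q => FormalMultilinearSeries.coeff q k)
    (hp.eq_formalMultilinearSeries hp.analyticAt.hasFPowerSeriesAt)
  simp only [p, FormalMultilinearSeries.coeff_ofScalars] at hk
  rw [hk, taylorCoeff, div_eq_inv_mul]

theorem norm_taylorCoeff_le (hf : DifferentiableOn ℂ f (ball 0 1)) {r M : ℝ} (hr : 0 < r)
    (hr1 : r < 1) (hM : ∀ z ∈ closedBall (0 : ℂ) r, ‖f z‖ ≤ M) (k : ℕ) :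
    ‖taylorCoeff f k‖ ≤ M / r ^ k := by
  have hcl : DiffContOnCl ℂ f (ball 0 r) :=
    (hf.mono (closedBall_subset_ball hr1)).diffContOnCl_ball subset_rfl
  have h := Complex.norm_iteratedDeriv_le_of_forall_mem_sphere_norm_le k hr hcl
    fun z hz => hM z (sphere_subset_closedBall hz)
  rw [taylorCoeff, norm_mul, norm_inv, Complex.norm_natCast,
    inv_mul_le_iff₀ (by positivity), ← mul_div_assoc]
  exact h

theorem norm_sub_sum_taylorCoeff_le (hf : DifferentiableOn ℂ f (ball 0 1)) {r M : ℝ} (hr : 0 < r)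
    (hr1 : r < 1) (hM : ∀ z ∈ closedBall (0 : ℂ) r, ‖f z‖ ≤ M) (k : ℕ) {w : ℂ}
    (hw : ‖w‖ ≤ r / 2) :
    ‖f w - ∑ j ∈ Finset.range k, taylorCoeff f j * w ^ j‖ ≤ 2 * M * (‖w‖ / r) ^ k := by
  have hM0 : 0 ≤ M := (norm_nonneg _).trans (hM 0 (mem_closedBall_self hr.le))
  have hratio : ‖w‖ / r ≤ 1 / 2 := by rw [div_le_iff₀ hr]; linarith
  have htail := (hasSum_nat_add_iff' k).2 (hasSum_taylorCoeff hf (z := w) (by linarith))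
  have hgeom : HasSum (fun j : ℕ => M * (‖w‖ / r) ^ k * (1 / 2) ^ j) (M * (‖w‖ / r) ^ k * 2) :=
    hasSum_geometric_two.mul_left _
  rw [show 2 * M * (‖w‖ / r) ^ k = M * (‖w‖ / r) ^ k * 2 by ring]
  refine htail.norm_le_of_bounded hgeom fun j => ?_
  calc ‖taylorCoeff f (j + k) * w ^ (j + k)‖
      ≤ M / r ^ (j + k) * ‖w‖ ^ (j + k) := by
        rw [norm_mul, norm_pow]
        gcongr
        exact norm_taylorCoeff_le hf hr hr1 hM _
    _ = M * (‖w‖ / r) ^ k * (‖w‖ / r) ^ j := by rw [pow_add, div_pow, div_pow]; field_simp; ring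
    _ ≤ M * (‖w‖ / r) ^ k * (1 / 2) ^ j := by gcongr

end Taylor

section TwoVariables

variable {g : ℂ → ℂ → ℂ}

theorem differentiableOn_slice_right (hg : DifferentiableOn ℂ (Function.uncurry g) (ball 0 1))
    {u : ℂ} (hu : ‖u‖ < 1) : DifferentiableOn ℂ (g u) (ball 0 1) :=
  hg.comp (f := fun w => (u, w)) (by fun_prop) fun w hw => by
    simpa [Prod.norm_def, hu] using hw

theorem differentiableOn_slice_left (hg : DifferentiableOn ℂ (Function.uncurry g) (ball 0 1))
    {w : ℂ} (hw : ‖w‖ < 1) : DifferentiableOn ℂ (fun u => g u w) (ball 0 1) :=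
  hg.comp (f := fun u => (u, w)) (by fun_prop) fun u hu => by
    simpa [Prod.norm_def, hw] using hu

theorem exists_norm_le_of_isCompact (hg : DifferentiableOn ℂ (Function.uncurry g) (ball 0 1))
    {K : Set ℂ} (hK : IsCompact K) (hK1 : K ⊆ ball 0 1) {r : ℝ} (hr : r < 1) :
    ∃ M, ∀ u ∈ K, ∀ w ∈ closedBall (0 : ℂ) r, ‖g u w‖ ≤ M := by
  have hsub : K ×ˢ closedBall (0 : ℂ) r ⊆ ball 0 1 := by
    rw [← Prod.mk_zero_zero, ← ball_prod_same]
    exact prod_mono hK1 (closedBall_subset_ball hr)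
  obtain ⟨M, hM⟩ := (hK.prod (isCompact_closedBall 0 r)).exists_bound_of_continuousOn
    (hg.continuousOn.mono hsub)
  exact ⟨M, fun u hu w hw => hM (u, w) ⟨hu, hw⟩⟩

theorem tendstoLocallyUniformlyOn_taylorCoeff
    (hg : DifferentiableOn ℂ (Function.uncurry g) (ball 0 1)) (k : ℕ) :
    TendstoLocallyUniformlyOn
      (fun w u => (g u w - ∑ j ∈ Finset.range k, taylorCoeff (g u) j * w ^ j) / w ^ k)
      (fun u => taylorCoeff (g u) k) (𝓝[≠] (0 : ℂ)) (ball 0 1) := by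
  refine (tendstoLocallyUniformlyOn_iff_forall_isCompact isOpen_ball).2 fun K hK1 hK => ?_
  obtain ⟨M, hM⟩ := exists_norm_le_of_isCompact hg hK hK1 one_half_lt_one
  have hlim : Tendsto (fun w : ℂ => 2 * M * 2 ^ (k + 1) * ‖w‖) (𝓝[≠] 0) (𝓝 0) :=
    tendsto_nhdsWithin_of_tendsto_nhds (Continuous.tendsto' (by fun_prop) _ _ (by simp))
  refine Metric.tendstoUniformlyOn_iff.2 fun ε hε => ?_
  have hsmall : ∀ᶠ w : ℂ in 𝓝[≠] 0, ‖w‖ < 1 / 4 :=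
    nhdsWithin_le_nhds (by
      simpa [ball_zero_eq] using ball_mem_nhds (0 : ℂ) (by norm_num : (0 : ℝ) < 1 / 4))
  filter_upwards [hlim.eventually_lt_const hε, hsmall, self_mem_nhdsWithin] with w hwε hw hw0 u hu
  have : 0 < ‖w‖ := norm_pos_iff.2 hw0
  have hsub := norm_sub_sum_taylorCoeff_le
    (differentiableOn_slice_right hg (mem_ball_zero_iff.1 (hK1 hu))) one_half_pos one_half_lt_one
    (hM u hu) (k + 1) (w := w) (by linarith)
  have hsplit : (g u w - ∑ j ∈ Finset.range k, taylorCoeff (g u) j * w ^ j) / w ^ k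
      - taylorCoeff (g u) k
      = (g u w - ∑ j ∈ Finset.range (k + 1), taylorCoeff (g u) j * w ^ j) / w ^ k := by
    rw [Finset.sum_range_succ]
    field_simp [show w ≠ 0 from hw0]
    ring
  rw [dist_comm, dist_eq_norm, hsplit, norm_div, norm_pow]
  refine lt_of_le_of_lt ?_ hwε
  rw [div_le_iff₀ (by positivity)]
  calc _ ≤ _ := hsub
    _ = 2 * M * 2 ^ (k + 1) * ‖w‖ * ‖w‖ ^ k := by ring

theorem differentiableOn_taylorCoeff
    (hg : DifferentiableOn ℂ (Function.uncurry g) (ball 0 1)) (k : ℕ) :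
    DifferentiableOn ℂ (fun u => taylorCoeff (g u) k) (ball 0 1) := by
  induction k using Nat.strong_induction_on with
  | _ k ih =>
    refine (tendstoLocallyUniformlyOn_taylorCoeff hg k).differentiableOn ?_ isOpen_ball
    filter_upwards [nhdsWithin_le_nhds (ball_mem_nhds (0 : ℂ) one_pos)] with w hw
    refine ((differentiableOn_slice_left hg (mem_ball_zero_iff.1 hw)).sub ?_).div_const _
    exact .fun_sum fun j hj => (ih j (Finset.mem_range.1 hj)).mul_const _

theorem exists_norm_taylorCoeff_taylorCoeff_le
    (hg : DifferentiableOn ℂ (Function.uncurry g) (ball 0 1)) :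
    ∃ M, ∀ j k, ‖taylorCoeff (fun u => taylorCoeff (g u) k) j‖ ≤ M * 2 ^ (j + k) := by
  obtain ⟨M, hM⟩ := exists_norm_le_of_isCompact hg (isCompact_closedBall 0 (1 / 2))
    (closedBall_subset_ball one_half_lt_one) one_half_lt_one
  refine ⟨M, fun j k => ?_⟩
  have hk : ∀ u ∈ closedBall (0 : ℂ) (1 / 2), ‖taylorCoeff (g u) k‖ ≤ M / (1 / 2) ^ k := by
    intro u hu
    have hu1 := (mem_closedBall_zero_iff.1 hu).trans_lt one_half_lt_one
    exact norm_taylorCoeff_le (differentiableOn_slice_right hg hu1) one_half_pos one_half_lt_one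
      (hM u hu) k
  refine (norm_taylorCoeff_le (differentiableOn_taylorCoeff hg k) one_half_pos one_half_lt_one
    hk j).trans_eq ?_
  rw [one_div, inv_pow, inv_pow, div_inv_eq_mul, div_inv_eq_mul, mul_assoc, ← pow_add, add_comm k]

theorem summable_taylorCoeff_taylorCoeff
    (hg : DifferentiableOn ℂ (Function.uncurry g) (ball 0 1)) {u w : ℂ}
    (hu : ‖u‖ ≤ 1 / 4) (hw : ‖w‖ ≤ 1 / 4) :
    Summable fun p : ℕ × ℕ =>
      taylorCoeff (fun u => taylorCoeff (g u) p.2) p.1 * u ^ p.1 * w ^ p.2 := by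
  obtain ⟨M, hM⟩ := exists_norm_taylorCoeff_taylorCoeff_le hg
  have hM0 : 0 ≤ M := by simpa using (norm_nonneg _).trans (hM 0 0)
  have hgeom := summable_geometric_two
  refine .of_norm_bounded ((hgeom.mul_of_nonneg hgeom (fun _ => by positivity)
    fun _ => by positivity).mul_left M) fun p => ?_
  calc ‖taylorCoeff (fun u => taylorCoeff (g u) p.2) p.1 * u ^ p.1 * w ^ p.2‖
      ≤ M * 2 ^ (p.1 + p.2) * (1 / 4) ^ p.1 * (1 / 4) ^ p.2 := by
        rw [norm_mul, norm_mul, norm_pow, norm_pow]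
        gcongr
        exact hM p.1 p.2
    _ = M * ((1 / 2) ^ p.1 * (1 / 2) ^ p.2) := by
        rw [show (1 / 2 : ℝ) = 2 * (1 / 4) by norm_num, mul_pow, mul_pow, pow_add]
        ring

theorem hasSum_sum_antidiagonal {α : Type*} [AddCommMonoid α] [TopologicalSpace α]
    [ContinuousAdd α] [RegularSpace α] {a : ℕ × ℕ → α} {s : α} (h : HasSum a s) :
    HasSum (fun l => ∑ p ∈ antidiagonal l, a p) s := by
  have := (Finset.HasAntidiagonal.sigmaAntidiagonalEquivProd.hasSum_iff.2 h).sigma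
    fun l => hasSum_fintype _
  simpa only [Finset.univ_eq_attach, Function.comp_apply,
    Finset.HasAntidiagonal.sigmaAntidiagonalEquivProd_apply, Finset.sum_attach] using this

theorem taylorCoeff_line (hg : DifferentiableOn ℂ (Function.uncurry g) (ball 0 1))
    {x : ℂ} (hx : ‖x‖ ≤ 1) (l : ℕ) :
    taylorCoeff (fun w => g (x * w) w) l =
      ∑ p ∈ antidiagonal l, taylorCoeff (fun u => taylorCoeff (g u) p.2) p.1 * x ^ p.1 := by
  set a : ℕ × ℕ → ℂ := fun p => taylorCoeff (fun u => taylorCoeff (g u) p.2) p.1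
  suffices h : taylorCoeff (fun w => g (x * w) w) =
      fun l => ∑ p ∈ antidiagonal l, a p * x ^ p.1 from congrFun h l
  refine taylorCoeff_eq_of_hasSum (r := 1 / 4) (by norm_num) fun w hw => ?_
  have hxw : ‖x * w‖ ≤ ‖w‖ := by
    rw [norm_mul]
    exact mul_le_of_le_one_left (norm_nonneg _) hx
  have hsum := (summable_taylorCoeff_taylorCoeff hg (hxw.trans hw.le) hw.le).hasSum
  have hrow (k : ℕ) : HasSum (fun j => a (j, k) * (x * w) ^ j * w ^ k)
      (taylorCoeff (g (x * w)) k * w ^ k) :=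
    (hasSum_taylorCoeff (differentiableOn_taylorCoeff hg k) (by linarith)).mul_right _
  have hval : ∑' p : ℕ × ℕ, a p * (x * w) ^ p.1 * w ^ p.2 = g (x * w) w :=
    (((Equiv.prodComm ℕ ℕ).hasSum_iff.2 hsum).prod_fiberwise hrow).unique
      (hasSum_taylorCoeff (differentiableOn_slice_right hg (by linarith)) (by linarith))
  rw [hval] at hsum
  convert hasSum_sum_antidiagonal hsum using 2 with l
  rw [Finset.sum_mul]
  refine Finset.sum_congr rfl fun p hp => ?_
  rw [← Finset.HasAntidiagonal.mem_antidiagonal.1 hp, mul_pow, pow_add]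
  ring

end TwoVariables

/-! ### Rotation-invariant measures on the unit disc -/

section Parseval

/-- Invariance of a measure on `ℂ` under all rotations about the origin. -/
def IsRotationInvariant (μ : Measure ℂ) : Prop :=
  ∀ u : Circle, MeasurePreserving (fun z => (u : ℂ) * z) μ μ

/-- The squared norm `∫ ‖z ^ k‖ ^ 2 ∂μ` of the monomial `z ^ k` in `L²(μ)`. -/
def radialMoment (μ : Measure ℂ) (k : ℕ) : ℝ :=
  ∫ z, ‖z‖ ^ (2 * k) ∂μ

variable {μ : Measure ℂ}

theorem radialMoment_nonneg (μ : Measure ℂ) (k : ℕ) : 0 ≤ radialMoment μ k :=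
  integral_nonneg fun _ => by positivity

theorem integral_pow_mul_conj_pow_eq_zero (hμ : IsRotationInvariant μ) {j k : ℕ} (hjk : j ≠ k) :
    ∫ z, z ^ j * conj z ^ k ∂μ = 0 := by
  set u : Circle := Circle.exp (Real.pi / ((j : ℝ) - k))
  have hjk' : (j : ℂ) - k ≠ 0 := sub_ne_zero.2 (Nat.cast_injective.ne hjk)
  have hu : (u : ℂ) ^ j * conj (u : ℂ) ^ k = -1 := by
    rw [← Circle.coe_inv_eq_conj, Circle.coe_inv, ← Complex.exp_pi_mul_I, Circle.coe_exp,
      ← Complex.exp_neg, ← Complex.exp_nat_mul, ← Complex.exp_nat_mul, ← Complex.exp_add]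
    congr 1
    push_cast
    field_simp
    ring
  have hrot : ∫ z, z ^ j * conj z ^ k ∂μ = ∫ z, (u * z) ^ j * conj (u * z) ^ k ∂μ := by
    conv_lhs => rw [← (hμ u).map_eq]
    exact integral_map (hμ u).aemeasurable (by fun_prop)
  have hneg : ∫ z, (u * z) ^ j * conj (u * z) ^ k ∂μ = -∫ z, z ^ j * conj z ^ k ∂μ := by
    rw [← integral_neg]
    congr 1 with z
    rw [map_mul, mul_pow, mul_pow, mul_mul_mul_comm, hu, neg_one_mul]
  exact self_eq_neg.1 (hrot.trans hneg)

theorem IsRotationInvariant.restrict_closedBall (hμ : IsRotationInvariant μ) (r : ℝ) :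
    IsRotationInvariant (μ.restrict (closedBall 0 r)) := by
  intro u
  have hpre : (fun z => (u : ℂ) * z) ⁻¹' closedBall 0 r = closedBall 0 r := by
    ext z
    simp [Circle.norm_coe]
  simpa only [hpre] using (hμ u).restrict_preimage (measurableSet_closedBall (x := 0) (ε := r))

variable [IsFiniteMeasure μ]

theorem integrable_of_continuous_of_ae_norm_le {E : Type*} [NormedAddCommGroup E] {f : ℂ → E}
    (hf : Continuous f) {r : ℝ} (hμ : ∀ᵐ z ∂μ, ‖z‖ ≤ r) : Integrable f μ := by
  obtain ⟨C, hC⟩ := (isCompact_closedBall (0 : ℂ) r).exists_bound_of_continuousOn hf.continuousOn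
  refine .of_bound hf.aestronglyMeasurable C ?_
  filter_upwards [hμ] with z hz using hC z (mem_closedBall_zero_iff.2 hz)

theorem integral_norm_sum_sq (hμ : IsRotationInvariant μ) {r : ℝ} (hr : ∀ᵐ z ∂μ, ‖z‖ ≤ r)
    (c : ℕ → ℂ) (s : Finset ℕ) :
    ∫ z, ‖∑ k ∈ s, c k * z ^ k‖ ^ 2 ∂μ = ∑ k ∈ s, ‖c k‖ ^ 2 * radialMoment μ k := by
  have hexpand (z : ℂ) : ((‖∑ k ∈ s, c k * z ^ k‖ ^ 2 : ℝ) : ℂ) =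
      ∑ j ∈ s, ∑ k ∈ s, c j * conj (c k) * (z ^ j * conj z ^ k) := by
    push_cast
    rw [← Complex.mul_conj', map_sum, Finset.sum_mul_sum]
    simp only [map_mul, map_pow, mul_mul_mul_comm]
  have hint (j k : ℕ) : Integrable (fun z => c j * conj (c k) * (z ^ j * conj z ^ k)) μ :=
    integrable_of_continuous_of_ae_norm_le (by fun_prop) hr
  have hdiag (k : ℕ) : ∫ z, z ^ k * conj z ^ k ∂μ = (radialMoment μ k : ℂ) := by
    rw [radialMoment, ← integral_complex_ofReal]
    congr 1 with z
    rw [← mul_pow, Complex.mul_conj', pow_mul]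
    push_cast
    rfl
  apply Complex.ofReal_injective
  rw [← integral_complex_ofReal, integral_congr_ae (.of_forall hexpand),
    integral_finsetSum _ fun j _ => integrable_finsetSum _ fun k _ => hint j k]
  push_cast
  refine Finset.sum_congr rfl fun j hj => ?_
  rw [integral_finsetSum _ fun k _ => hint j k, Finset.sum_eq_single_of_mem j hj]
  · rw [integral_const_mul, hdiag, Complex.mul_conj']
  · intro k _ hkj
    rw [integral_const_mul, integral_pow_mul_conj_pow_eq_zero hμ hkj.symm, mul_zero]

theorem lintegral_norm_sq_of_ae_norm_le (hμ : IsRotationInvariant μ) {r : ℝ} (hr0 : 0 ≤ r)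
    (hr1 : r < 1) (hr : ∀ᵐ z ∂μ, ‖z‖ ≤ r) {f : ℂ → ℂ} {c : ℕ → ℂ}
    (hf : ∀ z, ‖z‖ < 1 → HasSum (fun k => c k * z ^ k) (f z)) :
    ∫⁻ z, ENNReal.ofReal (‖f z‖ ^ 2) ∂μ =
      ∑' k, ENNReal.ofReal (‖c k‖ ^ 2 * radialMoment μ k) := by
  have hpart (N : ℕ) : ∫⁻ z, ENNReal.ofReal (‖∑ k ∈ Finset.range N, c k * z ^ k‖ ^ 2) ∂μ =
      ∑ k ∈ Finset.range N, ENNReal.ofReal (‖c k‖ ^ 2 * radialMoment μ k) := by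
    rw [← ofReal_integral_eq_lintegral_ofReal (integrable_of_continuous_of_ae_norm_le
        (by fun_prop) hr) (.of_forall fun _ => by positivity),
      integral_norm_sum_sq hμ hr, ENNReal.ofReal_sum_of_nonneg]
    exact fun k _ => mul_nonneg (by positivity) (radialMoment_nonneg μ k)
  have hsum : Summable fun k => ‖c k‖ * r ^ k := by
    simpa [abs_of_nonneg hr0] using
      (hf r (by simpa [abs_of_nonneg hr0] using hr1)).summable.norm
  have hbound (N : ℕ) : ∀ᵐ z ∂μ, ENNReal.ofReal (‖∑ k ∈ Finset.range N, c k * z ^ k‖ ^ 2) ≤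
      ENNReal.ofReal ((∑' k, ‖c k‖ * r ^ k) ^ 2) := by
    filter_upwards [hr] with z hz
    gcongr
    calc ‖∑ k ∈ Finset.range N, c k * z ^ k‖
        ≤ ∑ k ∈ Finset.range N, ‖c k‖ * r ^ k := norm_sum_le_of_le _ fun k _ => by
          rw [norm_mul, norm_pow]
          gcongr
      _ ≤ ∑' k, ‖c k‖ * r ^ k := hsum.sum_le_tsum _ fun k _ => by positivity
  have hlim : ∀ᵐ z ∂μ, Tendsto
      (fun N => ENNReal.ofReal (‖∑ k ∈ Finset.range N, c k * z ^ k‖ ^ 2)) atTop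
      (𝓝 (ENNReal.ofReal (‖f z‖ ^ 2))) := by
    filter_upwards [hr] with z hz
    exact ENNReal.tendsto_ofReal (((hf z (hz.trans_lt hr1)).tendsto_sum_nat.norm).pow 2)
  refine tendsto_nhds_unique (tendsto_lintegral_of_dominated_convergence _
    (fun N => by fun_prop) hbound (by simp [ENNReal.mul_eq_top]) hlim) ?_
  simpa only [hpart] using ENNReal.tendsto_nat_tsum _

theorem ofReal_mul_radialMoment {r : ℝ} (hr : ∀ᵐ z ∂μ, ‖z‖ ≤ r) {a : ℝ} (ha : 0 ≤ a) (k : ℕ) :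
    ENNReal.ofReal (a * radialMoment μ k) = ∫⁻ z, ENNReal.ofReal (a * ‖z‖ ^ (2 * k)) ∂μ := by
  rw [radialMoment, ← integral_const_mul, ofReal_integral_eq_lintegral_ofReal
    (integrable_of_continuous_of_ae_norm_le (by fun_prop) hr) (.of_forall fun _ => by positivity)]

theorem lintegral_norm_sq_eq_tsum (hμ : IsRotationInvariant μ) (hμ1 : ∀ᵐ z ∂μ, ‖z‖ < 1)
    {f : ℂ → ℂ} {c : ℕ → ℂ} (hf : ∀ z, ‖z‖ < 1 → HasSum (fun k => c k * z ^ k) (f z)) :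
    ∫⁻ z, ENNReal.ofReal (‖f z‖ ^ 2) ∂μ =
      ∑' k, ENNReal.ofReal (‖c k‖ ^ 2 * radialMoment μ k) := by
  set r : ℕ → ℝ := fun N => 1 - 1 / (N + 1)
  have hball (N : ℕ) : ∫⁻ z in closedBall 0 (r N), ENNReal.ofReal (‖f z‖ ^ 2) ∂μ =
      ∫⁻ z in closedBall 0 (r N), ∑' k, ENNReal.ofReal (‖c k‖ ^ 2 * ‖z‖ ^ (2 * k)) ∂μ := by
    have hmem : ∀ᵐ z ∂μ.restrict (closedBall 0 (r N)), ‖z‖ ≤ r N := by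
      filter_upwards [ae_restrict_mem measurableSet_closedBall] with z hz
      exact mem_closedBall_zero_iff.1 hz
    rw [lintegral_norm_sq_of_ae_norm_le (hμ.restrict_closedBall _)
      (sub_nonneg.2 (div_le_one_of_le₀ (by simp) (by positivity)))
      (sub_lt_self _ (by positivity)) hmem hf, lintegral_tsum fun k => by fun_prop]
    simp_rw [ofReal_mul_radialMoment hmem (sq_nonneg _)]
  have hmono : Directed (· ⊆ ·) fun N => closedBall (0 : ℂ) (r N) :=
    (monotone_nat_of_le_succ fun N => closedBall_subset_closedBall (by
      simp only [r]; gcongr; simp)).directed_le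
  have hunion : ∀ᵐ z ∂μ, z ∈ ⋃ N, closedBall (0 : ℂ) (r N) := by
    filter_upwards [hμ1] with z hz
    obtain ⟨N, hN⟩ := exists_nat_one_div_lt (sub_pos.2 hz)
    exact mem_iUnion.2 ⟨N, mem_closedBall_zero_iff.2 (by simp only [r]; linarith)⟩
  simp_rw [ofReal_mul_radialMoment (hμ1.mono fun _ hz => hz.le) (sq_nonneg _)]
  rw [← lintegral_tsum fun k => by fun_prop, ← Measure.restrict_eq_self_of_ae_mem hunion,
    setLIntegral_iUnion_of_directed _ hmono, setLIntegral_iUnion_of_directed _ hmono]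
  exact iSup_congr hball

end Parseval

section ProductLaw

variable {μ : Measure ℂ} {n : ℕ}

theorem aemeasurable_norm_sq_of_continuousOn {X : Type*} [TopologicalSpace X] [MeasurableSpace X]
    [OpensMeasurableSpace X] {ν : Measure X} {U : Set X} (hU : IsOpen U) (hν : ∀ᵐ x ∂ν, x ∈ U)
    {f : X → ℂ} (hf : ContinuousOn f U) :
    AEMeasurable (fun x => ENNReal.ofReal (‖f x‖ ^ 2)) ν := by
  rw [← Measure.restrict_eq_self_of_ae_mem hν]
  exact (hf.norm.pow 2).aemeasurable hU.measurableSet |>.ennreal_ofReal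

theorem polydisc_eq_ball (n : ℕ) : polydisc n = ball 0 1 := by
  ext z
  rw [mem_ball_zero_iff, pi_norm_lt_iff one_pos]
  rfl

theorem isOpen_polydisc (n : ℕ) : IsOpen (polydisc n) :=
  polydisc_eq_ball n ▸ isOpen_ball

theorem norm_prod_lt_one [NeZero n] {z : Fin n → ℂ} (hz : z ∈ polydisc n) : ‖∏ j, z j‖ < 1 := by
  rw [norm_prod, ← Finset.mul_prod_erase _ _ (Finset.mem_univ (0 : Fin n))]
  exact mul_lt_one_of_nonneg_of_lt_one_left (norm_nonneg _) (hz 0)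
    (Finset.prod_le_one (fun _ _ => norm_nonneg _) fun i _ => (hz i).le)

variable [IsFiniteMeasure μ]

theorem ae_mem_polydisc (hμ1 : ∀ᵐ z ∂μ, ‖z‖ < 1) :
    ∀ᵐ z ∂Measure.pi fun _ : Fin n => μ, z ∈ polydisc n :=
  ae_all_iff.2 fun _ => Measure.tendsto_eval_ae_ae.eventually (p := fun w : ℂ => ‖w‖ < 1) hμ1

theorem IsRotationInvariant.map_prod [NeZero n] (hμ : IsRotationInvariant μ) :
    IsRotationInvariant ((Measure.pi fun _ : Fin n => μ).map fun z => ∏ j, z j) := by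
  intro u
  have hrot : MeasurePreserving
      (fun (z : Fin n → ℂ) i => Circle.coeHom ((Pi.mulSingle 0 u : Fin n → Circle) i) * z i)
      (.pi fun _ => μ) (.pi fun _ => μ) :=
    measurePreserving_pi _ _ fun _ => hμ _
  have hprod : Measurable fun z : Fin n → ℂ => ∏ j, z j := by fun_prop
  refine ⟨by fun_prop, ?_⟩
  rw [Measure.map_map (by fun_prop) hprod]
  conv_rhs => rw [← hrot.map_eq, Measure.map_map hprod hrot.measurable]
  congr 1 with z
  have hu : ∏ i, Circle.coeHom ((Pi.mulSingle 0 u : Fin n → Circle) i) = u := by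
    rw [← _root_.map_prod, Fintype.prod_pi_mulSingle']
    rfl
  simp only [Function.comp_apply, Finset.prod_mul_distrib, hu]

theorem radialMoment_map_prod (k : ℕ) :
    radialMoment ((Measure.pi fun _ : Fin n => μ).map fun z => ∏ j, z j) k =
      radialMoment μ k ^ n := by
  rw [radialMoment, integral_map (by fun_prop) (by fun_prop)]
  simp only [norm_prod, ← Finset.prod_pow]
  rw [integral_fintype_prod_eq_prod fun _ w => ‖w‖ ^ (2 * k)]
  simp [radialMoment]

theorem lintegral_norm_sq_comp_prod [NeZero n] (hμ : IsRotationInvariant μ)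
    (hμ1 : ∀ᵐ z ∂μ, ‖z‖ < 1) {f : ℂ → ℂ} (hf : DifferentiableOn ℂ f (ball 0 1)) :
    ∫⁻ z, ENNReal.ofReal (‖f (∏ j, z j)‖ ^ 2) ∂(Measure.pi fun _ : Fin n => μ) =
      ∑' k, ENNReal.ofReal (‖taylorCoeff f k‖ ^ 2 * radialMoment μ k ^ n) := by
  have hprod : Measurable fun z : Fin n → ℂ => ∏ j, z j := by fun_prop
  have hlaw1 : ∀ᵐ w ∂(Measure.pi fun _ : Fin n => μ).map fun z => ∏ j, z j, ‖w‖ < 1 :=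
    (ae_map_iff hprod.aemeasurable (measurableSet_lt (by fun_prop) (by fun_prop))).2
      ((ae_mem_polydisc hμ1).mono fun z => norm_prod_lt_one)
  rw [← lintegral_map' (f := fun w => ENNReal.ofReal (‖f w‖ ^ 2)) _ hprod.aemeasurable,
    lintegral_norm_sq_eq_tsum hμ.map_prod hlaw1 fun z => hasSum_taylorCoeff hf]
  · simp only [radialMoment_map_prod]
  · exact aemeasurable_norm_sq_of_continuousOn isOpen_ball
      (hlaw1.mono fun w => mem_ball_zero_iff.2) hf.continuousOn

end ProductLaw

section LIntegralPi

variable {n : ℕ}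

theorem lintegral_pi_succ {α : Fin (n + 1) → Type*} [∀ i, MeasurableSpace (α i)]
    {μ : ∀ i, Measure (α i)} [∀ i, SigmaFinite (μ i)] {H : (∀ i, α i) → ℝ≥0∞}
    (hH : AEMeasurable H (.pi μ)) :
    ∫⁻ z, H z ∂(Measure.pi μ) =
      ∫⁻ u, ∫⁻ v, H (Fin.cons u v) ∂(Measure.pi fun i : Fin n => μ i.succ) ∂μ 0 := by
  have he := (measurePreserving_piFinSuccAbove μ 0).symm
  rw [← he.lintegral_comp_emb (MeasurableEquiv.measurableEmbedding _), lintegral_prod]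
  · simp only [MeasurableEquiv.piFinSuccAbove_symm_apply, Fin.insertNthEquiv_zero]
    rfl
  · exact hH.comp_quasiMeasurePreserving he.quasiMeasurePreserving

theorem lintegral_pi_prod_eq_prod {α : Fin n → Type*} [∀ i, MeasurableSpace (α i)]
    {μ : ∀ i, Measure (α i)} [∀ i, SigmaFinite (μ i)] {g : ∀ i, α i → ℝ≥0∞}
    (hg : ∀ i, Measurable (g i)) :
    ∫⁻ z, ∏ i, g i (z i) ∂(Measure.pi μ) = ∏ i, ∫⁻ w, g i w ∂μ i := by
  induction n with
  | zero => simp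
  | succ n ih =>
    have hprod : Measurable fun z : ∀ i, α i => ∏ i, g i (z i) :=
      Finset.measurable_fun_prod _ fun i _ => (hg i).comp (measurable_pi_apply i)
    have htail : Measurable fun v : ∀ i : Fin n, α i.succ => ∏ i : Fin n, g i.succ (v i) :=
      Finset.measurable_fun_prod _ fun i _ => (hg i.succ).comp (measurable_pi_apply i)
    rw [lintegral_pi_succ hprod.aemeasurable, Fin.prod_univ_succ, ← lintegral_mul_const _ (hg 0)]
    refine lintegral_congr fun u => ?_
    simp only [Fin.prod_univ_succ, Fin.cons_zero, Fin.cons_succ]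
    rw [lintegral_const_mul _ htail, ih fun i => hg i.succ]

theorem pi_withDensity_eq {α : Fin n → Type*} [∀ i, MeasurableSpace (α i)]
    {μ : ∀ i, Measure (α i)} [∀ i, SigmaFinite (μ i)] {w : ∀ i, α i → ℝ≥0∞}
    [∀ i, SigmaFinite ((μ i).withDensity (w i))] (hw : ∀ i, Measurable (w i)) :
    (Measure.pi fun i => (μ i).withDensity (w i)) =
      (Measure.pi μ).withDensity fun z => ∏ i, w i (z i) := by
  refine Measure.pi_eq fun s hs => ?_
  have hind (z : ∀ i, α i) : (univ.pi s).indicator (fun z => ∏ i, w i (z i)) z =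
      ∏ i, (s i).indicator (w i) (z i) := by
    classical
    simp only [indicator_apply, mem_univ_pi, Finset.prod_ite_zero, Finset.mem_univ, true_imp_iff]
  rw [withDensity_apply _ (.univ_pi hs), ← lintegral_indicator (.univ_pi hs)]
  simp_rw [hind, lintegral_pi_prod_eq_prod fun i => (hw i).indicator (hs i),
    lintegral_indicator (hs _), withDensity_apply _ (hs _)]

end LIntegralPi

/-! ### Restriction to a complex line -/

section Kernel

variable {n : ℕ}

/-- The degree `k` part, at the diagonal point `(x, x)`, of the reproducing kernel
`∏ i, ∑ j, (z i * conj (w i)) ^ j / radialMoment μ j` of the holomorphic functions in `L²(μⁿ)`. -/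
def diagKernelCoeff (μ : Measure ℂ) (x : Fin n → ℂ) (k : ℕ) : ℝ :=
  coeff k (∏ i, PowerSeries.mk fun j => ‖x i‖ ^ (2 * j) / radialMoment μ j)

variable {μ : Measure ℂ}

theorem diagKernelCoeff_zero (x : Fin 0 → ℂ) (k : ℕ) :
    diagKernelCoeff μ x k = if k = 0 then 1 else 0 := by
  simp [diagKernelCoeff, coeff_one]

theorem diagKernelCoeff_succ (x : Fin (n + 1) → ℂ) (k : ℕ) :
    diagKernelCoeff μ x k = ∑ p ∈ antidiagonal k,
      ‖x 0‖ ^ (2 * p.1) / radialMoment μ p.1 * diagKernelCoeff μ (Fin.tail x) p.2 := by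
  simp only [diagKernelCoeff, Fin.prod_univ_succ, coeff_mul, coeff_mk, Fin.tail]

theorem diagKernelCoeff_nonneg (x : Fin n → ℂ) (k : ℕ) : 0 ≤ diagKernelCoeff μ x k := by
  induction n generalizing k with
  | zero =>
    rw [diagKernelCoeff_zero]
    split_ifs <;> norm_num
  | succ n ih =>
    rw [diagKernelCoeff_succ]
    exact Finset.sum_nonneg fun p _ =>
      mul_nonneg (div_nonneg (by positivity) (radialMoment_nonneg μ _)) (ih _ _)

theorem ofReal_norm_sum_sq_div_le {ι : Type*} (s : Finset ι) (a : ι → ℂ) {t : ι → ℝ}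
    (ht : ∀ i, 0 ≤ t i) :
    ENNReal.ofReal (‖∑ i ∈ s, a i‖ ^ 2) / ENNReal.ofReal (∑ i ∈ s, t i) ≤
      ∑ i ∈ s, ENNReal.ofReal (‖a i‖ ^ 2) / ENNReal.ofReal (t i) := by
  by_cases hdeg : ∃ i ∈ s, t i = 0 ∧ a i ≠ 0
  · obtain ⟨i, hi, hti, hai⟩ := hdeg
    refine le_top.trans_eq (Eq.symm (ENNReal.sum_eq_top.2 ⟨i, hi, ?_⟩))
    rw [hti, ENNReal.ofReal_zero, ENNReal.div_zero]
    simpa using hai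
  push Not at hdeg
  have hCS : ‖∑ i ∈ s, a i‖ ^ 2 ≤ (∑ i ∈ s, ‖a i‖ ^ 2 / t i) * ∑ i ∈ s, t i := by
    refine (pow_le_pow_left₀ (norm_nonneg _) (norm_sum_le _ _) 2).trans ?_
    refine Finset.sum_sq_le_sum_mul_sum_of_sq_le_mul s
      (fun i _ => div_nonneg (sq_nonneg _) (ht i)) (fun i _ => ht i) fun i hi => ?_
    rcases eq_or_ne (t i) 0 with h0 | h0
    · simp [hdeg i hi h0]
    · rw [div_mul_cancel₀ _ h0]
  refine ENNReal.div_le_of_le_mul ?_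
  refine (ENNReal.ofReal_le_ofReal hCS).trans ?_
  rw [ENNReal.ofReal_mul (Finset.sum_nonneg fun i _ => div_nonneg (sq_nonneg _) (ht i)),
    ENNReal.ofReal_sum_of_nonneg fun i _ => div_nonneg (sq_nonneg _) (ht i)]
  gcongr with i
  rcases eq_or_ne (t i) 0 with h0 | h0
  · simp [h0]
  · rw [ENNReal.ofReal_div_of_pos ((ht i).lt_of_ne' h0)]

theorem ofReal_norm_sum_antidiagonal_sq_div_le (hpos : ∀ k, 0 < radialMoment μ k)
    (x : Fin (n + 1) → ℂ) (a : ℕ × ℕ → ℂ) (l : ℕ) :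
    ENNReal.ofReal (‖∑ p ∈ antidiagonal l, a p * x 0 ^ p.1‖ ^ 2) /
        ENNReal.ofReal (diagKernelCoeff μ x l) ≤
      ∑ p ∈ antidiagonal l, ENNReal.ofReal (‖a p‖ ^ 2 * radialMoment μ p.1) /
        ENNReal.ofReal (diagKernelCoeff μ (Fin.tail x) p.2) := by
  rw [diagKernelCoeff_succ]
  refine (ofReal_norm_sum_sq_div_le _ _ fun p => mul_nonneg
    (div_nonneg (by positivity) (hpos _).le) (diagKernelCoeff_nonneg _ _)).trans ?_
  refine Finset.sum_le_sum fun p _ => ?_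
  rcases eq_or_ne (x 0 ^ p.1) 0 with hx | hx
  · simp [hx]
  have hx' : 0 < ‖x 0‖ ^ (2 * p.1) / radialMoment μ p.1 := by
    have := hpos p.1
    rw [mul_comm, pow_mul, ← norm_pow]
    positivity
  refine le_of_eq ?_
  rw [ENNReal.ofReal_mul hx'.le, norm_mul, mul_pow, norm_pow, ← pow_mul, mul_comm p.1 2,
    show ‖a p‖ ^ 2 * ‖x 0‖ ^ (2 * p.1) = ‖x 0‖ ^ (2 * p.1) / radialMoment μ p.1 *
      (‖a p‖ ^ 2 * radialMoment μ p.1) by have := (hpos p.1).ne'; field_simp,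
    ENNReal.ofReal_mul hx'.le,
    ENNReal.mul_div_mul_left _ _ (by simpa using hx') ENNReal.ofReal_ne_top]

theorem differentiableOn_comp_cons {E : Type*} [NormedAddCommGroup E] [NormedSpace ℂ E]
    {F : (Fin (n + 1) → ℂ) → ℂ} (hF : DifferentiableOn ℂ F (polydisc (n + 1))) {s : Set E}
    {a : E → ℂ} {b : E → Fin n → ℂ} (ha : Differentiable ℂ a) (hb : Differentiable ℂ b)
    (hs : ∀ p ∈ s, ‖a p‖ < 1 ∧ b p ∈ polydisc n) :
    DifferentiableOn ℂ (fun p => F (Fin.cons (a p) (b p))) s := by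
  have hcons : Differentiable ℂ fun p => (Fin.cons (a p) (b p) : Fin (n + 1) → ℂ) :=
    ha.finCons hb
  exact hF.comp hcons.differentiableOn fun p hp => Fin.forall_fin_succ.2 (hs p hp)

theorem smul_eq_cons_tail (w : ℂ) (x : Fin (n + 1) → ℂ) :
    w • x = Fin.cons (x 0 * w) (w • Fin.tail x) := by
  ext i
  refine Fin.cases ?_ (fun i => ?_) i <;> simp [Fin.tail, mul_comm]

variable [IsFiniteMeasure μ]

theorem tsum_ofReal_norm_taylorCoeff_sq_div_le_of_slices (hμ : IsRotationInvariant μ)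
    (hμ1 : ∀ᵐ z ∂μ, ‖z‖ < 1) (hpos : ∀ k, 0 < radialMoment μ k) {g : ℂ → ℂ → ℂ}
    (hg : DifferentiableOn ℂ (Function.uncurry g) (ball 0 1)) {x : Fin (n + 1) → ℂ}
    (hx : ‖x 0‖ ≤ 1) :
    ∑' l, ENNReal.ofReal (‖taylorCoeff (fun w => g (x 0 * w) w) l‖ ^ 2) /
        ENNReal.ofReal (diagKernelCoeff μ x l) ≤
      ∫⁻ u, ∑' k, ENNReal.ofReal (‖taylorCoeff (g u) k‖ ^ 2) /
        ENNReal.ofReal (diagKernelCoeff μ (Fin.tail x) k) ∂μ := by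
  set a : ℕ × ℕ → ℂ := fun p => taylorCoeff (fun u => taylorCoeff (g u) p.2) p.1
  set S := diagKernelCoeff μ (Fin.tail x)
  have hcol (k : ℕ) : DifferentiableOn ℂ (fun u => taylorCoeff (g u) k) (ball 0 1) :=
    differentiableOn_taylorCoeff hg k
  have hmeas (k : ℕ) : AEMeasurable (fun u => ENNReal.ofReal (‖taylorCoeff (g u) k‖ ^ 2)) μ :=
    aemeasurable_norm_sq_of_continuousOn isOpen_ball
      (hμ1.mono fun _ => mem_ball_zero_iff.2) (hcol k).continuousOn
  calc ∑' l, ENNReal.ofReal (‖taylorCoeff (fun w => g (x 0 * w) w) l‖ ^ 2) /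
        ENNReal.ofReal (diagKernelCoeff μ x l)
      ≤ ∑' l, ∑ p ∈ antidiagonal l, ENNReal.ofReal (‖a p‖ ^ 2 * radialMoment μ p.1) /
          ENNReal.ofReal (S p.2) := by
        refine ENNReal.tsum_le_tsum fun l => ?_
        rw [taylorCoeff_line hg hx]
        exact ofReal_norm_sum_antidiagonal_sq_div_le hpos x a l
    _ = ∑' k, ∑' j, ENNReal.ofReal (‖a (j, k)‖ ^ 2 * radialMoment μ j) /
          ENNReal.ofReal (S k) := by
        rw [(hasSum_sum_antidiagonal ENNReal.summable.hasSum).tsum_eq, ENNReal.tsum_prod',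
          ENNReal.tsum_comm]
    _ = ∑' k, (∫⁻ u, ENNReal.ofReal (‖taylorCoeff (g u) k‖ ^ 2) ∂μ) / ENNReal.ofReal (S k) := by
        simp only [div_eq_mul_inv, ENNReal.tsum_mul_right,
          lintegral_norm_sq_eq_tsum hμ hμ1 fun _ => hasSum_taylorCoeff (hcol _)]
        rfl
    _ = ∫⁻ u, ∑' k, ENNReal.ofReal (‖taylorCoeff (g u) k‖ ^ 2) / ENNReal.ofReal (S k) ∂μ := by
        rw [lintegral_tsum fun k => (hmeas k).div_const _]
        simp only [div_eq_mul_inv, lintegral_mul_const'' _ (hmeas _)]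

theorem tsum_ofReal_norm_taylorCoeff_sq_div_le (hμ : IsRotationInvariant μ)
    (hμ1 : ∀ᵐ z ∂μ, ‖z‖ < 1) (hpos : ∀ k, 0 < radialMoment μ k) {F : (Fin n → ℂ) → ℂ}
    (hF : DifferentiableOn ℂ F (polydisc n)) {x : Fin n → ℂ} (hx : x ∈ closedPolydisc n) :
    ∑' k, ENNReal.ofReal (‖taylorCoeff (fun w => F (w • x)) k‖ ^ 2) /
        ENNReal.ofReal (diagKernelCoeff μ x k) ≤
      ∫⁻ z, ENNReal.ofReal (‖F z‖ ^ 2) ∂(Measure.pi fun _ => μ) := by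
  induction n with
  | zero =>
    have hconst : taylorCoeff (fun w => F (w • x)) = Pi.single 0 (F x) := by
      refine taylorCoeff_eq_of_hasSum one_pos fun w _ => ?_
      rw [Subsingleton.elim (w • x) x]
      convert hasSum_single 0 fun k hk => ?_ <;> simp_all
    rw [Measure.pi_of_empty _ x, lintegral_dirac, hconst,
      tsum_eq_single 0 fun k hk => by simp [hk]]
    simp [diagKernelCoeff_zero]
  | succ n ih =>
    set g : ℂ → ℂ → ℂ := fun u w => F (Fin.cons u (w • Fin.tail x))
    have htail : Fin.tail x ∈ closedPolydisc n := fun i => hx i.succ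
    have hg : DifferentiableOn ℂ (Function.uncurry g) (ball 0 1) := by
      refine differentiableOn_comp_cons hF differentiable_fst (by fun_prop) fun p hp => ?_
      obtain ⟨hp1, hp2⟩ := max_lt_iff.1 (mem_ball_zero_iff.1 hp)
      refine ⟨hp1, fun i => ?_⟩
      rw [Pi.smul_apply, norm_smul]
      exact mul_lt_one_of_nonneg_of_lt_one_left (norm_nonneg _) hp2 (htail i)
    have hslice {u : ℂ} (hu : ‖u‖ < 1) :
        DifferentiableOn ℂ (fun v => F (Fin.cons u v)) (polydisc n) :=
      differentiableOn_comp_cons hF (differentiable_const u) differentiable_id fun _ hv => ⟨hu, hv⟩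
    have hline : (fun w => F (w • x)) = fun w => g (x 0 * w) w := by
      simp only [g, smul_eq_cons_tail _ x]
    rw [hline, lintegral_pi_succ (aemeasurable_norm_sq_of_continuousOn (isOpen_polydisc _)
      (ae_mem_polydisc hμ1) hF.continuousOn)]
    refine (tsum_ofReal_norm_taylorCoeff_sq_div_le_of_slices hμ hμ1 hpos hg (hx 0)).trans ?_
    refine lintegral_mono_ae ?_
    filter_upwards [hμ1] with u hu using ih (hslice hu) htail

end Kernel

section ExtremalPolynomials

variable {n : ℕ}

/-- The degree `k` part of the reproducing kernel of the holomorphic functions in `L²(μⁿ)` at the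
point `x`, as a polynomial in `z`. It is the extremal function for the `k`-th Taylor coefficient
along the complex line through `x`. -/
def kernelPoly (μ : Measure ℂ) (x : Fin n → ℂ) (k : ℕ) (z : Fin n → ℂ) : ℂ :=
  coeff k (∏ i, PowerSeries.mk fun j => (conj (x i) * z i) ^ j / (radialMoment μ j : ℂ))

variable {μ : Measure ℂ}

theorem kernelPoly_zero (x z : Fin 0 → ℂ) (k : ℕ) :
    kernelPoly μ x k z = if k = 0 then 1 else 0 := by
  simp [kernelPoly, coeff_one]

theorem kernelPoly_succ (x z : Fin (n + 1) → ℂ) (k : ℕ) :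
    kernelPoly μ x k z = ∑ p ∈ antidiagonal k,
      (conj (x 0) * z 0) ^ p.1 / (radialMoment μ p.1 : ℂ) *
        kernelPoly μ (Fin.tail x) p.2 (Fin.tail z) := by
  simp only [kernelPoly, Fin.prod_univ_succ, coeff_mul, coeff_mk, Fin.tail]

theorem kernelPoly_smul_self (x : Fin n → ℂ) (k : ℕ) (w : ℂ) :
    kernelPoly μ x k (w • x) = diagKernelCoeff μ x k * w ^ k := by
  induction n generalizing k with
  | zero =>
    rw [kernelPoly_zero, diagKernelCoeff_zero]
    split_ifs with hk <;> simp [hk]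
  | succ n ih =>
    rw [kernelPoly_succ, diagKernelCoeff_succ]
    push_cast
    rw [Finset.sum_mul]
    refine Finset.sum_congr rfl fun p hp => ?_
    rw [← Finset.HasAntidiagonal.mem_antidiagonal.1 hp,
      show Fin.tail (w • x) = w • Fin.tail x from rfl, ih, Pi.smul_apply, smul_eq_mul,
      pow_mul, ← Complex.conj_mul', pow_add]
    ring

theorem differentiable_kernelPoly (x : Fin n → ℂ) (k : ℕ) :
    Differentiable ℂ (kernelPoly μ x k) := by
  induction n generalizing k with
  | zero => exact differentiable_of_subsingleton
  | succ n ih =>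
    have htail : Differentiable ℂ fun z : Fin (n + 1) → ℂ => Fin.tail z := by
      unfold Fin.tail
      fun_prop
    rw [show kernelPoly μ x k = _ from funext fun z => kernelPoly_succ x z k]
    simp only [div_eq_mul_inv]
    exact .fun_sum fun p _ => .mul (by fun_prop) ((ih _ _).comp htail)

theorem measurable_ofReal_norm_kernelPoly_sq (x : Fin n → ℂ) (k : ℕ) :
    Measurable fun z => ENNReal.ofReal (‖kernelPoly μ x k z‖ ^ 2) :=
  ((differentiable_kernelPoly x k).continuous.norm.pow 2).measurable.ennreal_ofReal

variable [IsFiniteMeasure μ]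

theorem lintegral_norm_kernelPoly_cons_sq (hμ : IsRotationInvariant μ) (hμ1 : ∀ᵐ z ∂μ, ‖z‖ ≤ 1)
    (x : Fin (n + 1) → ℂ) (k : ℕ) (v : Fin n → ℂ) :
    ∫⁻ u, ENNReal.ofReal (‖kernelPoly μ x k (Fin.cons u v)‖ ^ 2) ∂μ =
      ∑ p ∈ antidiagonal k, ENNReal.ofReal (‖x 0‖ ^ (2 * p.1) / radialMoment μ p.1) *
        ENNReal.ofReal (‖kernelPoly μ (Fin.tail x) p.2 v‖ ^ 2) := by
  set c : ℕ → ℂ := fun j =>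
    conj (x 0) ^ j / (radialMoment μ j : ℂ) * kernelPoly μ (Fin.tail x) (k - j) v
  have hpoly (u : ℂ) :
      kernelPoly μ x k (Fin.cons u v) = ∑ j ∈ Finset.range (k + 1), c j * u ^ j := by
    rw [kernelPoly_succ, Finset.Nat.sum_antidiagonal_eq_sum_range_succ_mk]
    refine Finset.sum_congr rfl fun j _ => ?_
    simp only [c, Fin.cons_zero, Fin.tail_cons, mul_pow]
    ring
  have hc (j : ℕ) : ‖c j‖ ^ 2 * radialMoment μ j = ‖x 0‖ ^ (2 * j) / radialMoment μ j *
      ‖kernelPoly μ (Fin.tail x) (k - j) v‖ ^ 2 := by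
    simp only [c, norm_mul, norm_div, norm_pow, RCLike.norm_conj, Complex.norm_real,
      Real.norm_eq_abs, abs_of_nonneg (radialMoment_nonneg μ j)]
    rcases eq_or_ne (radialMoment μ j) 0 with h | h
    · simp [h]
    · field_simp
      ring
  simp_rw [hpoly]
  rw [← ofReal_integral_eq_lintegral_ofReal
    (integrable_of_continuous_of_ae_norm_le (by fun_prop) hμ1) (.of_forall fun _ => by positivity),
    integral_norm_sum_sq hμ hμ1, Finset.Nat.sum_antidiagonal_eq_sum_range_succ_mk,
    ENNReal.ofReal_sum_of_nonneg fun j _ => mul_nonneg (by positivity) (radialMoment_nonneg μ j)]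
  refine Finset.sum_congr rfl fun j _ => ?_
  rw [hc, ENNReal.ofReal_mul (div_nonneg (by positivity) (radialMoment_nonneg μ j))]

theorem lintegral_norm_kernelPoly_sq (hμ : IsRotationInvariant μ) (hμ1 : ∀ᵐ z ∂μ, ‖z‖ ≤ 1)
    (x : Fin n → ℂ) (k : ℕ) :
    ∫⁻ z, ENNReal.ofReal (‖kernelPoly μ x k z‖ ^ 2) ∂(Measure.pi fun _ => μ) =
      ENNReal.ofReal (diagKernelCoeff μ x k) := by
  induction n generalizing k with
  | zero =>
    rw [Measure.pi_of_empty _ x, lintegral_dirac, kernelPoly_zero, diagKernelCoeff_zero]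
    split_ifs <;> simp
  | succ n ih =>
    have hmeas {m : ℕ} (y : Fin m → ℂ) (l : ℕ) :
        Measurable fun z => ENNReal.ofReal (‖kernelPoly μ y l z‖ ^ 2) :=
      measurable_ofReal_norm_kernelPoly_sq y l
    rw [lintegral_pi_succ (hmeas x k).aemeasurable, lintegral_lintegral_swap]
    · simp_rw [lintegral_norm_kernelPoly_cons_sq hμ hμ1]
      rw [lintegral_finsetSum _ fun p _ => (hmeas _ _).const_mul _, diagKernelCoeff_succ,
        ENNReal.ofReal_sum_of_nonneg fun p _ => mul_nonneg
          (div_nonneg (by positivity) (radialMoment_nonneg μ _)) (diagKernelCoeff_nonneg _ _)]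
      refine Finset.sum_congr rfl fun p _ => ?_
      rw [lintegral_const_mul _ (hmeas _ _), ih,
        ENNReal.ofReal_mul (div_nonneg (by positivity) (radialMoment_nonneg μ _))]
    · exact ((hmeas x k).comp (continuous_fst.finCons continuous_snd).measurable).aemeasurable

end ExtremalPolynomials

section Criterion

variable {μ : Measure ℂ} [IsFiniteMeasure μ] {n : ℕ} [NeZero n]

theorem lintegral_norm_kernelPoly_comp_sq (hμ : IsRotationInvariant μ) (hμ1 : ∀ᵐ z ∂μ, ‖z‖ < 1)
    (x : Fin n → ℂ) (k : ℕ) :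
    ∫⁻ z, ENNReal.ofReal (‖kernelPoly μ x k ((∏ j, z j) • x)‖ ^ 2)
        ∂(Measure.pi fun _ : Fin n => μ) =
      ENNReal.ofReal (diagKernelCoeff μ x k ^ 2 * radialMoment μ k ^ n) := by
  set f : ℂ → ℂ := fun w => diagKernelCoeff μ x k * w ^ k
  have hcoeff : taylorCoeff f = Pi.single k (diagKernelCoeff μ x k : ℂ) := by
    refine taylorCoeff_eq_of_hasSum one_pos fun w _ => ?_
    convert hasSum_single k fun j hj => ?_ <;> simp_all
  simp_rw [kernelPoly_smul_self]
  rw [lintegral_norm_sq_comp_prod hμ hμ1 (f := f) (by fun_prop), hcoeff,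
    tsum_eq_single k fun j hj => by simp [hj]]
  simp

variable {x : Fin n → ℂ}

theorem lintegral_norm_comp_prod_smul_sq_le (hμ : IsRotationInvariant μ)
    (hμ1 : ∀ᵐ z ∂μ, ‖z‖ < 1) (hpos : ∀ k, 0 < radialMoment μ k) (hx : x ∈ closedPolydisc n)
    {C : ℝ} (hC : 0 < C) (hbound : ∀ k, diagKernelCoeff μ x k * radialMoment μ k ^ n ≤ C)
    {F : (Fin n → ℂ) → ℂ} (hF : DifferentiableOn ℂ F (polydisc n)) :
    ∫⁻ z : Fin n → ℂ, ENNReal.ofReal (‖F ((∏ j, z j) • x)‖ ^ 2) ∂(Measure.pi fun _ => μ) ≤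
      ENNReal.ofReal C * ∫⁻ z, ENNReal.ofReal (‖F z‖ ^ 2) ∂(Measure.pi fun _ => μ) := by
  set I := ∫⁻ z, ENNReal.ofReal (‖F z‖ ^ 2) ∂(Measure.pi fun _ => μ)
  rcases eq_or_ne I ⊤ with hI | hI
  · rw [hI, ENNReal.mul_top (by simpa using hC)]
    exact le_top
  have hline : DifferentiableOn ℂ (fun w : ℂ => F (w • x)) (ball 0 1) := by
    refine hF.comp (f := fun w : ℂ => w • x) (by fun_prop) fun w hw i => ?_
    change ‖w * x i‖ < 1
    rw [norm_mul]
    exact mul_lt_one_of_nonneg_of_lt_one_left (norm_nonneg _) (mem_ball_zero_iff.1 hw) (hx i)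
  set c := taylorCoeff fun w : ℂ => F (w • x)
  have hsum : ∑' k, ENNReal.ofReal (‖c k‖ ^ 2) / ENNReal.ofReal (diagKernelCoeff μ x k) ≤ I :=
    tsum_ofReal_norm_taylorCoeff_sq_div_le hμ hμ1 hpos hF hx
  have hterm (k : ℕ) : ENNReal.ofReal (‖c k‖ ^ 2 * radialMoment μ k ^ n) ≤
      ENNReal.ofReal C * (ENNReal.ofReal (‖c k‖ ^ 2) / ENNReal.ofReal (diagKernelCoeff μ x k)) := by
    rcases (diagKernelCoeff_nonneg (μ := μ) x k).eq_or_lt with h0 | h0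
    · have hfin := ENNReal.ne_top_of_tsum_ne_top (hsum.trans_lt hI.lt_top).ne k
      have hck : c k = 0 := by
        by_contra hck
        refine hfin ?_
        rw [← h0, ENNReal.ofReal_zero, ENNReal.div_zero]
        simpa using hck
      simp [hck]
    · rw [← ENNReal.ofReal_div_of_pos h0, ← ENNReal.ofReal_mul hC.le]
      refine ENNReal.ofReal_le_ofReal ?_
      rw [mul_div_assoc', le_div_iff₀ h0]
      nlinarith [mul_le_mul_of_nonneg_left (hbound k) (sq_nonneg ‖c k‖)]
  rw [lintegral_norm_sq_comp_prod hμ hμ1 hline]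
  calc _ ≤ ∑' k, ENNReal.ofReal C *
        (ENNReal.ofReal (‖c k‖ ^ 2) / ENNReal.ofReal (diagKernelCoeff μ x k)) :=
        ENNReal.tsum_le_tsum hterm
    _ ≤ ENNReal.ofReal C * I := by
        rw [ENNReal.tsum_mul_left]
        gcongr

theorem lintegral_norm_comp_prod_smul_sq_le_iff (hμ : IsRotationInvariant μ)
    (hμ1 : ∀ᵐ z ∂μ, ‖z‖ < 1) (hpos : ∀ k, 0 < radialMoment μ k) (hx : x ∈ closedPolydisc n)
    {C : ℝ} (hC : 0 < C) :
    (∀ f : (Fin n → ℂ) → ℂ, DifferentiableOn ℂ f (polydisc n) →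
      ∫⁻ z : Fin n → ℂ, ENNReal.ofReal (‖f ((∏ j, z j) • x)‖ ^ 2) ∂(Measure.pi fun _ => μ) ≤
        ENNReal.ofReal C * ∫⁻ z, ENNReal.ofReal (‖f z‖ ^ 2) ∂(Measure.pi fun _ => μ)) ↔
      ∀ k, diagKernelCoeff μ x k * radialMoment μ k ^ n ≤ C := by
  refine ⟨fun h k => ?_, fun h f hf =>
    lintegral_norm_comp_prod_smul_sq_le hμ hμ1 hpos hx hC h hf⟩
  have hk := h _ (differentiable_kernelPoly (μ := μ) x k).differentiableOn
  have hS := diagKernelCoeff_nonneg (μ := μ) x k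
  rw [lintegral_norm_kernelPoly_comp_sq hμ hμ1,
    lintegral_norm_kernelPoly_sq hμ (hμ1.mono fun _ hz => hz.le), ← ENNReal.ofReal_mul hC.le,
    ENNReal.ofReal_le_ofReal_iff (mul_nonneg hC.le hS), sq, mul_assoc, mul_comm] at hk
  rcases hS.eq_or_lt with h0 | h0
  · rw [← h0, zero_mul]
    exact hC.le
  · exact le_of_mul_le_mul_right hk h0

end Criterion

/-! ### Multiset coefficients -/

section Multichoose

theorem multichoose_add {R : Type*} [CommRing R] [BinomialRing R] (r s : R) (k : ℕ) :
    Ring.multichoose (r + s) k =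
      ∑ p ∈ antidiagonal k, Ring.multichoose r p.1 * Ring.multichoose s p.2 := by
  have hneg (t : R) (j : ℕ) : Ring.multichoose t j = Int.negOnePow j • Ring.choose (-t) j := by
    rw [Ring.choose_neg', smul_smul, ← sq, Int.units_sq, one_smul]
  simp only [hneg]
  rw [neg_add, Ring.add_choose_eq k (Commute.all _ _), Finset.smul_sum]
  refine Finset.sum_congr rfl fun p hp => ?_
  rw [smul_mul_smul_comm, ← Int.negOnePow_add, ← Nat.cast_add,
    Finset.HasAntidiagonal.mem_antidiagonal.1 hp]

theorem prod_mk_multichoose {R ι : Type*} [CommRing R] [BinomialRing R] (s : Finset ι)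
    (r : ι → R) :
    ∏ i ∈ s, PowerSeries.mk (Ring.multichoose (r i)) =
      PowerSeries.mk (Ring.multichoose (∑ i ∈ s, r i)) := by
  induction s using Finset.cons_induction with
  | empty =>
    ext k
    cases k <;> simp [coeff_one, Ring.multichoose_zero_succ]
  | cons a s ha ih =>
    ext k
    rw [Finset.prod_cons, Finset.sum_cons, ih, coeff_mul, coeff_mk, multichoose_add]
    simp only [coeff_mk]

theorem factorial_mul_multichoose_eq_prod (s : ℝ) (k : ℕ) :
    k ! * Ring.multichoose s k = ∏ j ∈ Finset.range k, (s + j) := by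
  rw [← nsmul_eq_mul, Ring.factorial_nsmul_multichoose_eq_ascPochhammer,
    Polynomial.ascPochhammer_smeval_eq_eval]
  induction k with
  | zero => simp
  | succ k ih => rw [ascPochhammer_succ_eval, ih, Finset.prod_range_succ]

theorem multichoose_pos {s : ℝ} (hs : 0 < s) (k : ℕ) : 0 < Ring.multichoose s k := by
  refine pos_of_mul_pos_right (a := (k ! : ℝ)) ?_ (Nat.cast_nonneg _)
  rw [factorial_mul_multichoose_eq_prod]
  exact Finset.prod_pos fun j _ => by positivity

theorem Gamma_add_natCast_eq {s : ℝ} (hs : 0 < s) (k : ℕ) :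
    Real.Gamma (s + k) = k ! * Ring.multichoose s k * Real.Gamma s := by
  rw [factorial_mul_multichoose_eq_prod]
  induction k with
  | zero => simp
  | succ k ih =>
    rw [Nat.cast_succ, ← add_assoc, Real.Gamma_add_one (by positivity), ih,
      Finset.prod_range_succ]
    ring

theorem multichoose_mul_GammaSeq {s : ℝ} (hs : 0 < s) (k : ℕ) :
    Ring.multichoose s k * Real.GammaSeq s k = (k : ℝ) ^ s / (s + k) := by
  have := (multichoose_pos hs k).ne'
  rw [Real.GammaSeq, Finset.prod_range_succ, ← factorial_mul_multichoose_eq_prod]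
  field_simp

theorem isTheta_multichoose {s : ℝ} (hs : 0 < s) :
    (fun k : ℕ => Ring.multichoose s k) =Θ[atTop] fun k : ℕ => (k : ℝ) ^ (s - 1) := by
  have hGamma := Real.GammaSeq_tendsto_Gamma s
  have hGamma0 := (Real.Gamma_pos_of_pos hs).ne'
  have hratio : Tendsto (fun k : ℕ => (k : ℝ) / (s + k)) atTop (𝓝 1) := by
    simpa only [add_comm s] using tendsto_natCast_div_add_atTop s
  refine Asymptotics.isTheta_of_div_tendsto_nhds_ne_zero (c := Real.Gamma s / 1) ?_ (by simpa)
  refine (hGamma.div hratio one_ne_zero).congr' ?_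
  filter_upwards [eventually_gt_atTop 0] with k hk
  have hk' : (0 : ℝ) < k := Nat.cast_pos.2 hk
  have hpos := multichoose_pos hs k
  have hseq : Real.GammaSeq s k = (k : ℝ) ^ s / (s + k) / Ring.multichoose s k := by
    rw [eq_div_iff hpos.ne', mul_comm, multichoose_mul_GammaSeq hs]
  rw [Pi.div_apply, hseq, Real.rpow_sub_one hk'.ne']
  field_simp

theorem isBigO_one_natCast_rpow_iff {e : ℝ} :
    (fun k : ℕ => (k : ℝ) ^ e) =O[atTop] (fun _ => 1 : ℕ → ℝ) ↔ e ≤ 0 := by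
  refine ⟨fun h => ?_, fun he => ?_⟩
  · by_contra! he
    have htop : Tendsto (fun k : ℕ => ‖(k : ℝ) ^ e‖) atTop atTop :=
      tendsto_norm_atTop_atTop.comp ((tendsto_rpow_atTop he).comp tendsto_natCast_atTop_atTop)
    exact not_isBoundedUnder_of_tendsto_atTop htop ((Asymptotics.isBigO_one_iff ℝ).1 h)
  · refine .of_bound 1 ?_
    filter_upwards [eventually_ge_atTop 1] with k hk
    rw [norm_one, mul_one, Real.norm_of_nonneg (by positivity)]
    exact Real.rpow_le_one_of_one_le_of_nonpos (Nat.one_le_cast.2 hk) he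

theorem exists_multichoose_div_pow_le_iff {s t : ℝ} (hs : 0 < s) (ht : 0 < t) (n : ℕ) :
    (∃ C > 0, ∀ k, Ring.multichoose t k / Ring.multichoose s k ^ n ≤ C) ↔
      t - 1 ≤ n * (s - 1) := by
  have hnonneg (k : ℕ) : 0 ≤ Ring.multichoose t k / Ring.multichoose s k ^ n :=
    div_nonneg (multichoose_pos ht k).le (pow_nonneg (multichoose_pos hs k).le n)
  have hasymp : (fun k : ℕ => Ring.multichoose t k / Ring.multichoose s k ^ n) =Θ[atTop]
      fun k : ℕ => (k : ℝ) ^ (t - 1 - n * (s - 1)) := by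
    refine ((isTheta_multichoose ht).div ((isTheta_multichoose hs).pow n)).trans_eventuallyEq ?_
    filter_upwards [eventually_gt_atTop 0] with k hk
    have hk' : (0 : ℝ) < k := Nat.cast_pos.2 hk
    rw [Real.rpow_sub hk' (t - 1), mul_comm (n : ℝ), Real.rpow_mul_natCast hk'.le]
  rw [← sub_nonpos, ← isBigO_one_natCast_rpow_iff, ← hasymp.isBigO_congr_left,
    Asymptotics.isBigO_one_nat_atTop_iff]
  simp only [Real.norm_of_nonneg (hnonneg _)]
  exact ⟨fun ⟨C, _, hC⟩ => ⟨C, hC⟩,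
    fun ⟨C, hC⟩ => ⟨max C 1, by positivity, fun k => (hC k).trans (le_max_left C 1)⟩⟩

end Multichoose

/-! ### The weighted Bergman measures -/

section BergmanMeasure

theorem setIntegral_rpow_mul_one_sub_rpow {a b : ℝ} (ha : 0 < a) (hb : 0 < b) :
    ∫ t in Ioo 0 1, t ^ (a - 1) * (1 - t) ^ (b - 1) = ProbabilityTheory.beta a b := by
  have hbeta := ProbabilityTheory.beta_pos ha hb
  have hone : ∫ t in Ioo 0 1,
      1 / ProbabilityTheory.beta a b * t ^ (a - 1) * (1 - t) ^ (b - 1) = 1 := by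
    rw [integral_eq_lintegral_of_nonneg_ae _ (by fun_prop), ← ProbabilityTheory.lintegral_betaPDF,
      ProbabilityTheory.lintegral_betaPDF_eq_one ha hb, ENNReal.toReal_one]
    filter_upwards [ae_restrict_mem measurableSet_Ioo] with t ht
    exact mul_nonneg (mul_nonneg (by positivity) (Real.rpow_nonneg ht.1.le _))
      (Real.rpow_nonneg (sub_nonneg.2 ht.2.le) _)
  simp only [mul_assoc, integral_const_mul] at hone
  rwa [one_div, inv_mul_eq_one₀ hbeta.ne', eq_comm] at hone

theorem setIntegral_ball_fun_norm_sq (g : ℝ → ℝ) :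
    ∫ z in ball (0 : ℂ) 1, g (‖z‖ ^ 2) = Real.pi * ∫ t in Ioo 0 1, g t := by
  have hball (z : ℂ) : (ball (0 : ℂ) 1).indicator (fun z => g (‖z‖ ^ 2)) z =
      (Iio 1).indicator g (‖z‖ ^ 2) := by
    simp [indicator]
  have hsubst : ∫ r in Ioi (0 : ℝ), 2 * r * (Iio 1).indicator g (r ^ 2) = ∫ t in Ioo 0 1, g t := by
    rw [← Ioi_inter_Iio, ← setIntegral_indicator measurableSet_Iio,
      ← integral_comp_rpow_Ioi_of_pos (g := (Iio 1).indicator g) two_pos]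
    norm_num
  have hvol : (volume : Measure ℂ).real (ball 0 1) = Real.pi := by
    simp [Measure.real]
  rw [← integral_indicator measurableSet_ball]
  simp only [hball]
  rw [integral_fun_norm_addHaar volume fun r => (Iio 1).indicator g (r ^ 2),
    Complex.finrank_real_complex, hvol, ← hsubst]
  simp only [mul_assoc, integral_const_mul, smul_eq_mul, nsmul_eq_mul]
  norm_num
  ring

/-- The weighted area measure `dA_β` on the unit disc. -/
def discMeasure (β : ℝ) : Measure ℂ :=
  (volume.restrict (ball 0 1)).withDensity fun z =>
    ENNReal.ofReal ((β + 1) * (1 - ‖z‖ ^ 2) ^ β / Real.pi)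

theorem ae_norm_lt_one_discMeasure (β : ℝ) : ∀ᵐ z ∂discMeasure β, ‖z‖ < 1 := by
  refine (withDensity_absolutelyContinuous _ _).ae_le ?_
  filter_upwards [ae_restrict_mem measurableSet_ball] with z hz using mem_ball_zero_iff.1 hz

theorem isRotationInvariant_discMeasure (β : ℝ) : IsRotationInvariant (discMeasure β) := by
  intro u
  have hu : MeasurePreserving (fun z => (u : ℂ) * z) volume volume :=
    (rotation u).measurePreserving
  refine ⟨hu.measurable, ?_⟩
  ext s hs
  rw [Measure.map_apply hu.measurable hs, discMeasure, ← withDensity_indicator measurableSet_ball,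
    withDensity_apply _ hs, withDensity_apply _ (hu.measurable hs),
    ← hu.setLIntegral_comp_preimage hs (by fun_prop (disch := measurability))]
  simp [indicator, Circle.norm_coe]

variable {β : ℝ}

theorem weight_nonneg (hβ : -1 < β) {z : ℂ} (hz : ‖z‖ ≤ 1) :
    0 ≤ (β + 1) * (1 - ‖z‖ ^ 2) ^ β / Real.pi := by
  have h1 : 0 ≤ 1 - ‖z‖ ^ 2 := sub_nonneg.2 (pow_le_one₀ (norm_nonneg z) hz)
  have h2 : 0 ≤ β + 1 := by linarith
  positivity

theorem add_one_mul_beta_eq_inv_multichoose (hβ : -1 < β) (k : ℕ) :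
    (β + 1) * ProbabilityTheory.beta (k + 1) (β + 1) = (Ring.multichoose (β + 2) k)⁻¹ := by
  have hβ1 : 0 < β + 1 := by linarith
  have := Real.Gamma_pos_of_pos hβ1
  have hk := multichoose_pos (by linarith : 0 < β + 2) k
  rw [ProbabilityTheory.beta, show (k : ℝ) + 1 + (β + 1) = β + 2 + k by ring,
    Gamma_add_natCast_eq (by linarith), Real.Gamma_nat_eq_factorial,
    show β + 2 = β + 1 + 1 by ring, Real.Gamma_add_one hβ1.ne']
  rw [show β + 2 = β + 1 + 1 by ring] at hk
  field_simp

theorem setIntegral_weight_mul_norm_pow (hβ : -1 < β) (k : ℕ) :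
    ∫ z in ball (0 : ℂ) 1, (β + 1) * (1 - ‖z‖ ^ 2) ^ β / Real.pi * ‖z‖ ^ (2 * k) =
      (Ring.multichoose (β + 2) k)⁻¹ := by
  have hintegrand (t : ℝ) : (β + 1) * (1 - t) ^ β / Real.pi * t ^ k =
      (β + 1) / Real.pi * (t ^ ((k + 1 : ℝ) - 1) * (1 - t) ^ (β + 1 - 1)) := by
    rw [add_sub_cancel_right, add_sub_cancel_right, Real.rpow_natCast]
    ring
  simp only [pow_mul]
  rw [setIntegral_ball_fun_norm_sq fun t => (β + 1) * (1 - t) ^ β / Real.pi * t ^ k]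
  simp only [hintegrand, integral_const_mul]
  rw [setIntegral_rpow_mul_one_sub_rpow (by positivity) (by linarith),
    ← add_one_mul_beta_eq_inv_multichoose hβ]
  field_simp

theorem isFiniteMeasure_discMeasure (hβ : -1 < β) : IsFiniteMeasure (discMeasure β) := by
  have hint := setIntegral_weight_mul_norm_pow hβ 0
  simp only [mul_zero, pow_zero, mul_one, Ring.multichoose_zero_right, inv_one] at hint
  exact isFiniteMeasure_withDensity_ofReal
    (Integrable.of_integral_ne_zero (by rw [hint]; exact one_ne_zero)).hasFiniteIntegral

theorem radialMoment_discMeasure (hβ : -1 < β) (k : ℕ) :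
    radialMoment (discMeasure β) k = (Ring.multichoose (β + 2) k)⁻¹ := by
  rw [radialMoment, discMeasure, integral_withDensity_eq_integral_toReal_smul (by fun_prop)
    (by simp), ← setIntegral_weight_mul_norm_pow hβ]
  refine setIntegral_congr_fun measurableSet_ball fun z hz => ?_
  have hz' : ‖z‖ ≤ 1 := (mem_ball_zero_iff.1 hz).le
  rw [ENNReal.toReal_ofReal (weight_nonneg hβ hz'), smul_eq_mul]

theorem Vbeta_eq_pi (hβ : -1 < β) (n : ℕ) :
    Vbeta n β = Measure.pi fun _ => discMeasure β := by
  have hfin : IsFiniteMeasure (discMeasure β) := isFiniteMeasure_discMeasure hβ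
  have hpolydisc : polydisc n = univ.pi fun _ => ball 0 1 := by
    ext z
    simp [polydisc]
  rw [discMeasure] at hfin
  simp only [discMeasure]
  rw [Vbeta, pi_withDensity_eq fun _ => by fun_prop, ← Measure.restrict_pi_pi, ← hpolydisc]
  refine withDensity_congr_ae ?_
  filter_upwards [ae_restrict_mem (isOpen_polydisc n).measurableSet] with z hz
  exact ENNReal.ofReal_prod_of_nonneg fun i _ => weight_nonneg hβ (hz i).le

end BergmanMeasure

/-! ### The criterion for the weighted Bergman spaces -/

section Boundedness

variable {n : ℕ} {β : ℝ}

theorem bddBergman_prod_smul_iff [NeZero n] (hβ : -1 < β) {x : Fin n → ℂ}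
    (hx : x ∈ closedPolydisc n) :
    bddBergman n β (fun z => (∏ j, z j) • x) ↔ ∃ C > 0, ∀ k,
      diagKernelCoeff (discMeasure β) x k * radialMoment (discMeasure β) k ^ n ≤ C := by
  have := isFiniteMeasure_discMeasure hβ
  have hpos (k : ℕ) : 0 < radialMoment (discMeasure β) k := by
    rw [radialMoment_discMeasure hβ]
    exact inv_pos.2 (multichoose_pos (by linarith) k)
  rw [bddBergman, Vbeta_eq_pi hβ]
  exact exists_congr fun C => and_congr_right fun hC =>
    lintegral_norm_comp_prod_smul_sq_le_iff (isRotationInvariant_discMeasure β)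
      (ae_norm_lt_one_discMeasure β) hpos hx hC

theorem diagKernelCoeff_indicator_discMeasure (hβ : -1 < β) (A : Finset (Fin n)) (k : ℕ) :
    diagKernelCoeff (discMeasure β) (fun i => if i ∈ A then 1 else 0) k =
      Ring.multichoose (A.card * (β + 2)) k := by
  have hfactor (i : Fin n) :
      (PowerSeries.mk fun j => ‖(if i ∈ A then 1 else 0 : ℂ)‖ ^ (2 * j) /
        radialMoment (discMeasure β) j) =
      PowerSeries.mk (Ring.multichoose (if i ∈ A then β + 2 else 0)) := by
    ext j
    split_ifs <;> rcases j with - | j <;>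
      simp [radialMoment_discMeasure hβ, Ring.multichoose_zero_succ]
  simp only [diagKernelCoeff, hfactor]
  rw [prod_mk_multichoose, coeff_mk, Finset.sum_ite_mem, Finset.univ_inter, Finset.sum_const,
    nsmul_eq_mul]

theorem product_symbol_boundedness_general (A : Finset (Fin n)) (hA : A.Nonempty) (hβ : -1 < β) :
    bddBergman n β (fun z i => if i ∈ A then ∏ j, z j else 0) ↔
      (n : ℝ) - 1 ≤ (n - A.card) * (β + 2) := by
  have : NeZero n := ⟨fun hn => (hn ▸ hA.choose).elim0⟩
  have hsymbol : (fun (z : Fin n → ℂ) i => if i ∈ A then ∏ j, z j else 0) =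
      fun z => (∏ j, z j) • fun i => if i ∈ A then (1 : ℂ) else 0 := by
    ext z i
    simp
  have hx : (fun i => if i ∈ A then (1 : ℂ) else 0) ∈ closedPolydisc n := fun i => by
    dsimp only
    split_ifs <;> simp
  have hs : 0 < β + 2 := by linarith
  have ht : 0 < A.card * (β + 2) := mul_pos (Nat.cast_pos.2 hA.card_pos) hs
  rw [hsymbol, bddBergman_prod_smul_iff hβ hx]
  simp only [diagKernelCoeff_indicator_discMeasure hβ, radialMoment_discMeasure hβ, inv_pow,
    ← div_eq_mul_inv]
  rw [exists_multichoose_div_pow_le_iff hs ht, ← sub_nonneg, ← sub_nonneg (b := (n : ℝ) - 1)]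
  ring_nf

end Boundedness

theorem product_symbol_boundedness (n : ℕ) (hn : 2 ≤ n) (β : ℝ) (hβ : -1 < β) :
    bddBergman n β (fun z i => if (i : ℕ) < n - 1 then ∏ j, z j else 0) ↔
      (n : ℝ) ≤ β + 3 := by
  set A : Finset (Fin n) := {i | (i : ℕ) < n - 1}
  have hcard : A.card = n - 1 := by
    rw [Fin.card_filter_val_lt, min_eq_right (n.sub_le 1)]
  have hA : A.Nonempty := Finset.card_pos.1 (by lia)
  have h := product_symbol_boundedness_general A hA hβ
  rw [hcard, Nat.cast_pred (by lia), sub_sub_self, one_mul, sub_le_iff_le_add, add_assoc] at h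
  simpa [A, two_add_one_eq_three] using h

end
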